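/- arXiv:1108.4257 — 6 statements merged into one kernel-verified Lean document; each statement's English description precedes it below -/
import Mathlib

section
/- Define the subspace coding capacity C_SS(H,T) = max over input PMFs p_X on F^{T×M} of I(⟨X⟩;⟨Y⟩), where Y = XH. For any input PMF p_X achieving C_SS(H,T), there exists an input PMF p'_X also achieving C_SS(H,T) such that p'_X induces the same distribution of the column space ⟨X⟩ as p_X, and the support of p'_X contains at most one matrix with any given column space (i.e., if p'_X(X) > 0, p'_X(X') > 0 and ⟨X⟩ = ⟨X'⟩ then X = X'). -/
open scoped Classical
open Finset Matrix Module

noncomputable section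

/-- χ_m[r] = (q^m − 1)(q^m − q)⋯(q^m − q^{r−1}), with χ_m[0] = 1. -/
def chi (q m r : ℕ) : ℕ := ∏ i ∈ Finset.range r, (q ^ m - q ^ i)

/-- χ̃_m[r] = χ_m[r] · q^{−mr}, as a real number. -/
def chiTilde (q m r : ℕ) : ℝ := (chi q m r : ℝ) / (q : ℝ) ^ (m * r)

/-- Gaussian binomial [m choose r]_q = χ_m[r]/χ_r[r], as a real number. -/
def gaussR (q m r : ℕ) : ℝ := (chi q m r : ℝ) / (chi q r r : ℝ)

variable {F : Type} [Field F] [Fintype F]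

/-- Column space of a matrix. -/
def colSpace {m n : ℕ} (A : Matrix (Fin m) (Fin n) F) : Submodule F (Fin m → F) :=
  LinearMap.range A.mulVecLin

/-- Row space of a matrix. -/
def rowSpace {m n : ℕ} (A : Matrix (Fin m) (Fin n) F) : Submodule F (Fin n → F) :=
  colSpace Aᵀ

/-- Pr{XH = Y} for a random transfer matrix H with PMF `pH`, input `X`, output `Y`. -/
def prXY {k M N : ℕ} (pH : Matrix (Fin M) (Fin N) F → ℝ)
    (X : Matrix (Fin k) (Fin M) F) (Y : Matrix (Fin k) (Fin N) F) : ℝ :=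
  ∑ Hm : Matrix (Fin M) (Fin N) F, if X * Hm = Y then pH Hm else 0

/-- A PMF on a finite type: nonnegative and summing to one. -/
def IsPMF {Ω : Type*} [Fintype Ω] (p : Ω → ℝ) : Prop :=
  (∀ x, 0 ≤ p x) ∧ ∑ x, p x = 1

/-- α-type distribution: matrices with the same row space are equiprobable. -/
def IsAlphaType {T M : ℕ} (p : Matrix (Fin T) (Fin M) F → ℝ) : Prop :=
  ∀ X X' : Matrix (Fin T) (Fin M) F, rowSpace X = rowSpace X' → p X = p X'

/-- Mutual information I(f;g) (base 2) between two functions of a finitely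
distributed random element with PMF `p`; terms of zero probability vanish. -/
def mutualInfo {Ω A B : Type*} [Fintype Ω] (p : Ω → ℝ) (f : Ω → A) (g : Ω → B) : ℝ :=
  ∑ ω : Ω, p ω * Real.logb 2
    ((∑ ω' : Ω, if f ω' = f ω ∧ g ω' = g ω then p ω' else 0) /
      ((∑ ω' : Ω, if f ω' = f ω then p ω' else 0) *
        (∑ ω' : Ω, if g ω' = g ω then p ω' else 0)))

/-- Joint PMF of the input X and the independent transfer matrix H;
the channel output is Y = XH, i.e., `ω.1 * ω.2`. -/
def jointPMF {T M N : ℕ} (pX : Matrix (Fin T) (Fin M) F → ℝ)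
    (pH : Matrix (Fin M) (Fin N) F → ℝ) :
    Matrix (Fin T) (Fin M) F × Matrix (Fin M) (Fin N) F → ℝ :=
  fun ω => pX ω.1 * pH ω.2

/-- I(X;Y) for the LOC with input PMF `pX` and transfer PMF `pH`. -/
def miXY {T M N : ℕ} (pX : Matrix (Fin T) (Fin M) F → ℝ)
    (pH : Matrix (Fin M) (Fin N) F → ℝ) : ℝ :=
  mutualInfo (jointPMF pX pH) (fun ω => ω.1) (fun ω => ω.1 * ω.2)

/-- I(⟨X⟩;⟨Y⟩), mutual information between the column spaces. -/
def miColCol {T M N : ℕ} (pX : Matrix (Fin T) (Fin M) F → ℝ)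
    (pH : Matrix (Fin M) (Fin N) F → ℝ) : ℝ :=
  mutualInfo (jointPMF pX pH) (fun ω => colSpace ω.1) (fun ω => colSpace (ω.1 * ω.2))

/-- I(⟨X^T⟩;⟨Y^T⟩), mutual information between the row spaces. -/
def miRowRow {T M N : ℕ} (pX : Matrix (Fin T) (Fin M) F → ℝ)
    (pH : Matrix (Fin M) (Fin N) F → ℝ) : ℝ :=
  mutualInfo (jointPMF pX pH) (fun ω => rowSpace ω.1) (fun ω => rowSpace (ω.1 * ω.2))

/-- I(rank(X);rank(Y)). -/
def miRankRank {T M N : ℕ} (pX : Matrix (Fin T) (Fin M) F → ℝ)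
    (pH : Matrix (Fin M) (Fin N) F → ℝ) : ℝ :=
  mutualInfo (jointPMF pX pH) (fun ω => ω.1.rank) (fun ω => (ω.1 * ω.2).rank)

/-- Pr{rank(X) = r}. -/
def prRankX {T M : ℕ} (pX : Matrix (Fin T) (Fin M) F → ℝ) (r : ℕ) : ℝ :=
  ∑ x : Matrix (Fin T) (Fin M) F, if x.rank = r then pX x else 0

/-- Pr{rank(X) = r, rank(Y) = s} where Y = XH. -/
def prRankXY {T M N : ℕ} (pX : Matrix (Fin T) (Fin M) F → ℝ)
    (pH : Matrix (Fin M) (Fin N) F → ℝ) (r s : ℕ) : ℝ :=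
  ∑ ω : Matrix (Fin T) (Fin M) F × Matrix (Fin M) (Fin N) F,
    if ω.1.rank = r ∧ (ω.1 * ω.2).rank = s then jointPMF pX pH ω else 0

/-- J(rank(X);rank(Y)) = ∑_{r,s} Pr{rank X = r, rank Y = s} · log₂(χ_T[s]/χ_r[s]). -/
def Jrank (q : ℕ) {T M N : ℕ} (pX : Matrix (Fin T) (Fin M) F → ℝ)
    (pH : Matrix (Fin M) (Fin N) F → ℝ) : ℝ :=
  ∑ r ∈ Finset.range (T + 1), ∑ s ∈ Finset.range (T + 1),
    prRankXY pX pH r s * Real.logb 2 ((chi q T s : ℝ) / (chi q r s : ℝ))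

/-- Row-space-symmetric LOC: the transition probability P(Y|X) for ⟨Y⟩ ⊆ ⟨X⟩
is determined by the row spaces of the input and output matrices. -/
def RowSpaceSymmetric (T : ℕ) {M N : ℕ} (pH : Matrix (Fin M) (Fin N) F → ℝ) : Prop :=
  ∀ (X X' : Matrix (Fin T) (Fin M) F) (Y Y' : Matrix (Fin T) (Fin N) F),
    colSpace Y ≤ colSpace X → colSpace Y' ≤ colSpace X' →
    rowSpace X = rowSpace X' → rowSpace Y = rowSpace Y' →
    prXY pH X Y = prXY pH X' Y'

/-- Pr{⟨XH⟩ = V} for a fixed input matrix X. -/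
def prColY (T : ℕ) {M N : ℕ} (pH : Matrix (Fin M) (Fin N) F → ℝ)
    (X : Matrix (Fin T) (Fin M) F) (V : Submodule F (Fin T → F)) : ℝ :=
  ∑ Hm : Matrix (Fin M) (Fin N) F, if colSpace (X * Hm) = V then pH Hm else 0

/-- Unique subspace degradation: Pr{⟨XH⟩ = V} is the same for all inputs X
with the same column space. -/
def UniqueSubspaceDegradation (T : ℕ) {M N : ℕ}
    (pH : Matrix (Fin M) (Fin N) F → ℝ) : Prop :=
  ∀ (V : Submodule F (Fin T → F)) (X X' : Matrix (Fin T) (Fin M) F),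
    colSpace X = colSpace X' → prColY T pH X V = prColY T pH X' V

/-- Rank-symmetric LOC: P(Y|X) = μ(rank X, rank Y) when ⟨Y⟩ ⊆ ⟨X⟩, and 0 otherwise. -/
def RankSymmetric (T : ℕ) {M N : ℕ} (pH : Matrix (Fin M) (Fin N) F → ℝ) : Prop :=
  ∃ μ : ℕ → ℕ → ℝ, (∀ a b, 0 ≤ μ a b ∧ μ a b ≤ 1) ∧
    ∀ (X : Matrix (Fin T) (Fin M) F) (Y : Matrix (Fin T) (Fin N) F),
      prXY pH X Y = if colSpace Y ≤ colSpace X then μ X.rank Y.rank else 0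

/-- rank*(H) = max{r : Pr{rank H = r} > 0}. -/
def rankStar {M N : ℕ} (pH : Matrix (Fin M) (Fin N) F → ℝ) : ℕ :=
  sSup {r : ℕ | 0 < ∑ Hm : Matrix (Fin M) (Fin N) F, if Hm.rank = r then pH Hm else 0}

/-- Averaging over the fibres of `k`: replacing `b` by a fibrewise reweighting of `a`. -/
lemma fibre_avg_le {Ω K : Type*} [Fintype Ω] (a b : Ω → ℝ) (k : Ω → K) (φ : K → ℝ)
    (hb : ∀ ω, 0 ≤ b ω) (hφ : ∀ u, 0 ≤ φ u) :
    ∑ ω, a ω * (φ (k ω) * (∑ ω' : Ω, if k ω' = k ω then b ω' else 0) /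
      (∑ ω' : Ω, if k ω' = k ω then a ω' else 0)) ≤ ∑ ω, b ω * φ (k ω) := by
  have h1 : ∀ ω, a ω * (φ (k ω) * (∑ ω' : Ω, if k ω' = k ω then b ω' else 0) /
      (∑ ω' : Ω, if k ω' = k ω then a ω' else 0)) =
      ∑ ω' : Ω, b ω' * φ (k ω') * ((if k ω = k ω' then a ω else 0) /
        (∑ ω'' : Ω, if k ω'' = k ω' then a ω'' else 0)) := by
    intro ω
    rw [Finset.mul_sum, Finset.sum_div, Finset.mul_sum]
    refine Finset.sum_congr rfl fun ω' _ => ?_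
    by_cases h : k ω' = k ω
    · simp only [h, if_true]
      ring
    · have h' : ¬ k ω = k ω' := fun e => h e.symm
      simp [h, h']
  rw [Finset.sum_congr rfl fun ω _ => h1 ω, Finset.sum_comm]
  refine Finset.sum_le_sum fun ω' _ => ?_
  rw [← Finset.mul_sum, ← Finset.sum_div]
  exact mul_le_of_le_one_right (mul_nonneg (hb _) (hφ _)) (div_self_le_one _)

/-- The variational lower bound for mutual information. -/
lemma mutualInfo_ge {Ω A B : Type*} [Fintype Ω] (p p' : Ω → ℝ) (f : Ω → A) (g : Ω → B)
    (hp : ∀ ω, 0 ≤ p ω) (hp' : ∀ ω, 0 ≤ p' ω) (hs : ∀ ω, 0 < p' ω → 0 < p ω)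
    (hf : ∀ u, (∑ ω' : Ω, if f ω' = u then p' ω' else 0) =
      ∑ ω' : Ω, if f ω' = u then p ω' else 0) :
    ∑ ω : Ω, p' ω * Real.logb 2
    ((∑ ω' : Ω, if f ω' = f ω ∧ g ω' = g ω then p ω' else 0) /
      ((∑ ω' : Ω, if f ω' = f ω then p ω' else 0) *
        (∑ ω' : Ω, if g ω' = g ω then p ω' else 0))) ≤ mutualInfo p' f g := by
  have nn : ∀ (r : Ω → ℝ) (P : Ω → Prop), (∀ ω, 0 ≤ r ω) →
      0 ≤ ∑ ω' : Ω, if P ω' then r ω' else 0 := fun r P hr =>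
    Finset.sum_nonneg fun ω' _ => by split_ifs <;> simp [hr]
  have pos : ∀ (r : Ω → ℝ) (P : Ω → Prop) (ω : Ω), (∀ ω, 0 ≤ r ω) → P ω → 0 < r ω →
      0 < ∑ ω' : Ω, if P ω' then r ω' else 0 := fun r P ω hr hP h =>
    Finset.sum_pos' (fun ω' _ => by split_ifs <;> simp [hr]) ⟨ω, Finset.mem_univ _, by simpa [hP]⟩
  set Q : B → ℝ := fun v => ∑ ω' : Ω, if g ω' = v then p ω' else 0 with hQ
  set Q' : B → ℝ := fun v => ∑ ω' : Ω, if g ω' = v then p' ω' else 0 with hQ'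
  set J : A × B → ℝ := fun v => ∑ ω' : Ω, if (f ω', g ω') = v then p ω' else 0 with hJ
  set J' : A × B → ℝ := fun v => ∑ ω' : Ω, if (f ω', g ω') = v then p' ω' else 0 with hJ'
  have A1 : ∑ ω, p' ω * (Q' (g ω) / Q (g ω) * J (f ω, g ω) / J' (f ω, g ω)) ≤
      ∑ ω, p ω * (Q' (g ω) / Q (g ω)) := by
    convert fibre_avg_le p' p (fun ω => (f ω, g ω)) (fun v => Q' v.2 / Q v.2) hp
      (fun v => div_nonneg (nn _ _ hp') (nn _ _ hp))
  have A2 : ∑ ω, p ω * (Q' (g ω) / Q (g ω)) ≤ ∑ ω, p' ω := by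
    have := fibre_avg_le p p' g (fun _ => 1) hp' (fun _ => zero_le_one)
    simpa using this
  have l2 : 0 < Real.log 2 := Real.log_pos one_lt_two
  have key : ∀ ω, p' ω * Real.logb 2 (J (f ω, g ω) /
      ((∑ ω' : Ω, if f ω' = f ω then p ω' else 0) * Q (g ω))) +
      (p' ω - p' ω * (Q' (g ω) / Q (g ω) * J (f ω, g ω) / J' (f ω, g ω))) / Real.log 2 ≤
      p' ω * Real.logb 2 (J' (f ω, g ω) /
      ((∑ ω' : Ω, if f ω' = f ω then p' ω' else 0) * Q' (g ω))) := by
    intro ω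
    rcases (hp' ω).eq_or_lt with h0 | h0
    · simp [← h0]
    have h1 := hs ω h0
    have hq : 0 < Q (g ω) := pos p (fun x => g x = g ω) ω hp rfl h1
    have hq' : 0 < Q' (g ω) := pos p' (fun x => g x = g ω) ω hp' rfl h0
    have hj : 0 < J (f ω, g ω) := by convert pos p (fun x => (f x, g x) = (f ω, g ω)) ω hp rfl h1
    have hj' : 0 < J' (f ω, g ω) := by convert pos p' (fun x => (f x, g x) = (f ω, g ω)) ω hp' rfl h0
    have hm : 0 < ∑ ω' : Ω, if f ω' = f ω then p ω' else 0 :=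
      pos p (fun x => f x = f ω) ω hp rfl h1
    rw [hf (f ω)]
    clear_value Q Q' J J'
    generalize (∑ ω' : Ω, if f ω' = f ω then p ω' else 0) = m at *
    generalize Q (g ω) = q at *
    generalize Q' (g ω) = q' at *
    generalize J (f ω, g ω) = j at *
    generalize J' (f ω, g ω) = j' at *
    have t := Real.log_le_sub_one_of_pos (x := q' / q * j / j') (by positivity)
    have e : Real.log (j / (m * q)) = Real.log (j' / (m * q')) + Real.log (q' / q * j / j') := by
      rw [← Real.log_mul (by positivity) (by positivity)]
      congr 1
      field_simp
    unfold Real.logb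
    rw [e]
    have : p' ω * ((Real.log (j' / (m * q')) + Real.log (q' / q * j / j')) / Real.log 2) +
      (p' ω - p' ω * (q' / q * j / j')) / Real.log 2 =
      p' ω * (Real.log (j' / (m * q')) / Real.log 2) +
      p' ω * (Real.log (q' / q * j / j') - (q' / q * j / j' - 1)) / Real.log 2 := by ring
    rw [this]
    have : p' ω * (Real.log (q' / q * j / j') - (q' / q * j / j' - 1)) / Real.log 2 ≤ 0 :=
      div_nonpos_of_nonpos_of_nonneg
        (mul_nonpos_of_nonneg_of_nonpos h0.le (by linarith)) l2.le
    linarith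
  have S := Finset.sum_le_sum fun ω (_ : ω ∈ Finset.univ) => key ω
  rw [Finset.sum_add_distrib, ← Finset.sum_div, Finset.sum_sub_distrib] at S
  have R : 0 ≤ (∑ ω, p' ω - ∑ ω, p' ω * (Q' (g ω) / Q (g ω) * J (f ω, g ω) / J' (f ω, g ω))) /
      Real.log 2 := div_nonneg (by linarith) l2.le
  unfold mutualInfo
  simp only [hJ, hJ', hQ, hQ', Prod.mk.injEq] at S R ⊢
  linarith

/-- any maximizer of I(⟨X⟩;⟨Y⟩) can be replaced by a maximizer
inducing the same column-space distribution whose support contains at most one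
matrix with any given column space. -/
theorem subspace_capacity_deterministic_lift
    {F : Type} [Field F] [Fintype F] (T M N : ℕ)
    (pH : Matrix (Fin M) (Fin N) F → ℝ) (hpH : IsPMF pH)
    (pX : Matrix (Fin T) (Fin M) F → ℝ) (hpX : IsPMF pX)
    (hmax : ∀ p : Matrix (Fin T) (Fin M) F → ℝ, IsPMF p →
      miColCol p pH ≤ miColCol pX pH) :
    ∃ pX' : Matrix (Fin T) (Fin M) F → ℝ, IsPMF pX' ∧
      (∀ p : Matrix (Fin T) (Fin M) F → ℝ, IsPMF p →
        miColCol p pH ≤ miColCol pX' pH) ∧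
      (∀ U : Submodule F (Fin T → F),
        (∑ x : Matrix (Fin T) (Fin M) F, if colSpace x = U then pX' x else 0)
          = ∑ x : Matrix (Fin T) (Fin M) F, if colSpace x = U then pX x else 0) ∧
      (∀ x x' : Matrix (Fin T) (Fin M) F,
        0 < pX' x → 0 < pX' x' → colSpace x = colSpace x' → x = x') := by
  set c : Matrix (Fin T) (Fin M) F → ℝ := fun x => ∑ h : Matrix (Fin M) (Fin N) F,
    pH h * (Real.logb 2
    ((∑ ω' : Matrix (Fin T) (Fin M) F × Matrix (Fin M) (Fin N) F,
      if colSpace ω'.1 = colSpace x ∧ colSpace (ω'.1 * ω'.2) = colSpace (x * h)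
        then jointPMF pX pH ω' else 0) /
      ((∑ ω' : Matrix (Fin T) (Fin M) F × Matrix (Fin M) (Fin N) F,
        if colSpace ω'.1 = colSpace x then jointPMF pX pH ω' else 0) *
        (∑ ω' : Matrix (Fin T) (Fin M) F × Matrix (Fin M) (Fin N) F,
          if colSpace (ω'.1 * ω'.2) = colSpace (x * h) then jointPMF pX pH ω' else 0)))) with hc
  have ex : ∀ U : Submodule F (Fin T → F), ∃ s : Matrix (Fin T) (Fin M) F,
      ∀ y, colSpace y = U → 0 < pX y → colSpace s = U ∧ 0 < pX s ∧ c y ≤ c s := by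
    intro U
    by_cases hne : (Finset.univ.filter fun y : Matrix (Fin T) (Fin M) F =>
        colSpace y = U ∧ 0 < pX y).Nonempty
    · obtain ⟨s, hs, hmx⟩ := Finset.exists_max_image _ c hne
      simp only [Finset.mem_filter, Finset.mem_univ, true_and] at hs hmx
      exact ⟨s, fun y h1 h2 => ⟨hs.1, hs.2, hmx y ⟨h1, h2⟩⟩⟩
    · refine ⟨0, fun y h1 h2 => (hne ⟨y, ?_⟩).elim⟩
      simp [h1, h2]
  choose s hs using ex
  set p' : Matrix (Fin T) (Fin M) F → ℝ := fun x => if s (colSpace x) = x then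
    ∑ y : Matrix (Fin T) (Fin M) F, if colSpace y = colSpace x then pX y else 0 else 0 with hp'
  have E : ∀ φ : Matrix (Fin T) (Fin M) F → ℝ,
      ∑ x, p' x * φ x = ∑ y, pX y * φ (s (colSpace y)) := by
    intro φ
    have h1 : ∀ x, p' x * φ x = ∑ y : Matrix (Fin T) (Fin M) F,
        if s (colSpace x) = x ∧ colSpace y = colSpace x then pX y * φ x else 0 := by
      intro x
      simp only [hp']
      by_cases h : s (colSpace x) = x
      · simp only [h, if_true, true_and, Finset.sum_mul, ite_mul, zero_mul]
      · simp [h]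
    rw [Finset.sum_congr rfl fun x _ => h1 x, Finset.sum_comm]
    refine Finset.sum_congr rfl fun y _ => ?_
    rcases (hpX.1 y).eq_or_lt with h0 | h0
    · simp [← h0]
    have hy := hs (colSpace y) y rfl h0
    rw [Finset.sum_eq_single (s (colSpace y))]
    · simp [hy.1]
    · intro x _ hx
      refine if_neg fun h => hx ?_
      rw [h.2, h.1]
    · simp
  have nn' : ∀ x, 0 ≤ p' x := by
    intro x
    simp only [hp']
    split_ifs
    · exact Finset.sum_nonneg fun y _ => by split_ifs <;> simp [hpX.1]
    · exact le_rfl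
  have supp : ∀ x, 0 < p' x → s (colSpace x) = x ∧ 0 < pX x := by
    intro x hx
    simp only [hp'] at hx
    split_ifs at hx with h
    · refine ⟨h, ?_⟩
      obtain ⟨y, _, hy⟩ := Finset.exists_ne_zero_of_sum_ne_zero hx.ne'
      have hy1 : colSpace y = colSpace x := by
        by_contra hn
        simp [hn] at hy
      rw [if_pos hy1] at hy
      have := (hs _ y hy1 (lt_of_le_of_ne (hpX.1 y) (Ne.symm hy))).2.1
      rwa [h] at this
    · exact (lt_irrefl _ hx).elim
  have marg : ∀ U : Submodule F (Fin T → F),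
        (∑ x : Matrix (Fin T) (Fin M) F, if colSpace x = U then p' x else 0)
          = ∑ x : Matrix (Fin T) (Fin M) F, if colSpace x = U then pX x else 0 := by
    intro U
    have := E fun x => if colSpace x = U then 1 else 0
    simp only [mul_ite, mul_one, mul_zero] at this
    rw [this]
    refine Finset.sum_congr rfl fun y _ => ?_
    rcases (hpX.1 y).eq_or_lt with h0 | h0
    · simp [← h0]
    rw [(hs (colSpace y) y rfl h0).1]
  have pmf' : IsPMF p' := by
    refine ⟨nn', ?_⟩
    have := E fun _ => 1
    simp only [mul_one] at this
    rw [this, hpX.2]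
  have jm : ∀ (p : Matrix (Fin T) (Fin M) F → ℝ) (U : Submodule F (Fin T → F)),
      (∑ ω : Matrix (Fin T) (Fin M) F × Matrix (Fin M) (Fin N) F,
        if colSpace ω.1 = U then jointPMF p pH ω else 0) =
      ∑ x : Matrix (Fin T) (Fin M) F, if colSpace x = U then p x else 0 := by
    intro p U
    rw [Fintype.sum_prod_type]
    refine Finset.sum_congr rfl fun x _ => ?_
    by_cases h : colSpace x = U
    · simp only [h, if_true, jointPMF]
      rw [← Finset.mul_sum, hpH.2, mul_one]
    · simp [h]
  have ge := mutualInfo_ge (jointPMF pX pH) (jointPMF p' pH)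
    (fun ω => colSpace ω.1) (fun ω => colSpace (ω.1 * ω.2))
    (fun ω => mul_nonneg (hpX.1 _) (hpH.1 _)) (fun ω => mul_nonneg (nn' _) (hpH.1 _))
    (fun ω h => by
      have h2 : 0 < pH ω.2 := pos_of_mul_pos_right h (nn' _)
      have h1 : 0 < p' ω.1 := pos_of_mul_pos_left h (hpH.1 _)
      exact mul_pos (supp _ h1).2 h2)
    (fun U => (jm p' U).trans ((marg U).trans (jm pX U).symm))
  have lin : ∀ p : Matrix (Fin T) (Fin M) F → ℝ, ∑ x, p x * c x =
      ∑ ω : Matrix (Fin T) (Fin M) F × Matrix (Fin M) (Fin N) F, jointPMF p pH ω * (Real.logb 2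
    ((∑ ω' : Matrix (Fin T) (Fin M) F × Matrix (Fin M) (Fin N) F,
      if colSpace ω'.1 = colSpace ω.1 ∧ colSpace (ω'.1 * ω'.2) = colSpace (ω.1 * ω.2)
        then jointPMF pX pH ω' else 0) /
      ((∑ ω' : Matrix (Fin T) (Fin M) F × Matrix (Fin M) (Fin N) F,
        if colSpace ω'.1 = colSpace ω.1 then jointPMF pX pH ω' else 0) *
        (∑ ω' : Matrix (Fin T) (Fin M) F × Matrix (Fin M) (Fin N) F,
          if colSpace (ω'.1 * ω'.2) = colSpace (ω.1 * ω.2)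
            then jointPMF pX pH ω' else 0)))) := by
    intro p
    rw [Fintype.sum_prod_type (fun ω : Matrix (Fin T) (Fin M) F × Matrix (Fin M) (Fin N) F => _)]
    refine Finset.sum_congr rfl fun x _ => ?_
    simp only [hc]
    rw [Finset.mul_sum]
    refine Finset.sum_congr rfl fun h _ => ?_
    rw [← mul_assoc]
    rfl
  have cmp : ∑ x, pX x * c x ≤ ∑ x, p' x * c x := by
    rw [E c]
    refine Finset.sum_le_sum fun y _ => ?_
    rcases (hpX.1 y).eq_or_lt with h0 | h0
    · simp [← h0]
    · exact mul_le_mul_of_nonneg_left (hs (colSpace y) y rfl h0).2.2 h0.le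
  have fin : miColCol pX pH ≤ miColCol p' pH := by
    rw [lin pX, lin p'] at cmp
    exact cmp.trans ge
  refine ⟨p', pmf', fun p hp => (hmax p hp).trans fin, marg, fun x x' hx hx' h => ?_⟩
  rw [← (supp x hx).1, ← (supp x' hx').1, h]


end
end

section
/- If T ≥ M and LOC(H,T) is row-space symmetric, then LOC(H,T) has a unique subspace degradation; that is, for every subspace V of F^T and all X, X' ∈ F^{T×M} with ⟨X⟩ = ⟨X'⟩, Pr{⟨XH⟩ = V} = Pr{⟨X'H⟩ = V}. -/
open scoped Classical
open Finset Matrix Module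

noncomputable section

variable {F : Type} [Field F] [Fintype F]

lemma exists_equiv_of_surj {K V U : Type*} [Field K] [AddCommGroup V] [Module K V]
    [FiniteDimensional K V] [AddCommGroup U] [Module K U] (f g : V →ₗ[K] U)
    (hf : LinearMap.range f = ⊤) (hg : LinearMap.range g = ⊤) :
    ∃ e : V ≃ₗ[K] V, ∀ v, f (e v) = g v := by
  obtain ⟨p, hp⟩ := (LinearMap.ker f).exists_isCompl
  obtain ⟨p', hp'⟩ := (LinearMap.ker g).exists_isCompl
  have hk : finrank K (LinearMap.ker f) = finrank K (LinearMap.ker g) := by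
    have h1 := f.finrank_range_add_finrank_ker
    have h2 := g.finrank_range_add_finrank_ker
    rw [hf] at h1
    rw [hg] at h2
    omega
  let k := LinearEquiv.ofFinrankEq _ _ hk
  let e1 := LinearMap.equivProdOfSurjectiveOfIsCompl f
    ((LinearMap.ker f).projectionOnto p hp) hf (Submodule.range_projectionOnto hp)
    (by rw [Submodule.ker_projectionOnto]; exact hp)
  let e2 := LinearMap.equivProdOfSurjectiveOfIsCompl g
    ((LinearMap.ker g).projectionOnto p' hp') hg (Submodule.range_projectionOnto hp')
    (by rw [Submodule.ker_projectionOnto]; exact hp')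
  have h1 : ∀ v, (e1 v).1 = f v := fun v => by simp [e1]
  have h2 : ∀ v, (e2 v).1 = g v := fun v => by simp [e2]
  refine ⟨(e2.trans ((LinearEquiv.refl K U).prodCongr k.symm)).trans e1.symm, fun v => ?_⟩
  rw [← h1, ← h2]
  simp

lemma exists_unit_of_colSpace_eq {T M : ℕ} (X X' : Matrix (Fin T) (Fin M) F)
    (h : colSpace X = colSpace X') :
    ∃ G G' : Matrix (Fin M) (Fin M) F, G * G' = 1 ∧ G' * G = 1 ∧ X' = X * G := by
  have hle : ∀ v, X'.mulVecLin v ∈ LinearMap.range X.mulVecLin := fun v => by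
    change _ ∈ colSpace X
    rw [h]
    exact ⟨v, rfl⟩
  obtain ⟨e, he⟩ := exists_equiv_of_surj X.mulVecLin.rangeRestrict
    (X'.mulVecLin.codRestrict (LinearMap.range X.mulVecLin) hle)
    (LinearMap.range_rangeRestrict _) (by
      rw [LinearMap.range_eq_top]
      rintro ⟨y, hy⟩
      have hy' : y ∈ colSpace X' := h ▸ hy
      obtain ⟨v, hv⟩ := hy'
      exact ⟨v, Subtype.ext hv⟩)
  refine ⟨LinearMap.toMatrix' e.toLinearMap, LinearMap.toMatrix' e.symm.toLinearMap, ?_, ?_, ?_⟩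
  · rw [← LinearMap.toMatrix'_comp]; simp
  · rw [← LinearMap.toMatrix'_comp]; simp
  · apply Matrix.toLin'.injective
    ext1 v
    rw [Matrix.toLin'_mul, Matrix.toLin'_toMatrix']
    ext1
    have := congrArg Subtype.val (he (Pi.single v 1))
    funext i
    simpa using congrFun this.symm i

lemma colSpace_mul_le {a b c : ℕ} (A : Matrix (Fin a) (Fin b) F) (B : Matrix (Fin b) (Fin c) F) :
    colSpace (A * B) ≤ colSpace A := by
  unfold colSpace
  rw [Matrix.mulVecLin_mul]
  exact LinearMap.range_comp_le_range _ _

lemma rowSpace_mul_le {a b c : ℕ} (A : Matrix (Fin a) (Fin b) F) (B : Matrix (Fin b) (Fin c) F) :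
    rowSpace (A * B) ≤ rowSpace B := by
  unfold rowSpace
  rw [Matrix.transpose_mul]
  exact colSpace_mul_le _ _

lemma pH_mul_unit {T M N : ℕ} (hTM : M ≤ T) (pH : Matrix (Fin M) (Fin N) F → ℝ)
    (hrss : RowSpaceSymmetric T pH) (G G' : Matrix (Fin M) (Fin M) F) (hG : G' * G = 1)
    (Hm : Matrix (Fin M) (Fin N) F) : pH (G * Hm) = pH Hm := by
  obtain ⟨E, L, hL⟩ : ∃ (E : Matrix (Fin T) (Fin M) F) (L : Matrix (Fin M) (Fin T) F),
      L * E = 1 := by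
    refine ⟨(1 : Matrix (Fin T) (Fin T) F).submatrix id (Fin.castLE hTM),
      (1 : Matrix (Fin T) (Fin T) F).submatrix (Fin.castLE hTM) id, ?_⟩
    ext i j
    simp [Matrix.mul_apply, Matrix.one_apply]
  have key : ∀ K : Matrix (Fin M) (Fin N) F, prXY pH E (E * K) = pH K := by
    intro K
    have : ∀ K', E * K' = E * K ↔ K' = K := fun K' => by
      refine ⟨fun h => ?_, fun h => by rw [h]⟩
      have := congrArg (L * ·) h
      simpa [← Matrix.mul_assoc, hL] using this
    simp [prXY, this]
  rw [← key, ← key Hm]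
  apply hrss E E _ _ (colSpace_mul_le _ _) (colSpace_mul_le _ _) rfl
  apply le_antisymm
  · have : E * (G * Hm) = (E * G * L) * (E * Hm) := by
      rw [Matrix.mul_assoc (E * G), ← Matrix.mul_assoc L, hL, Matrix.one_mul, Matrix.mul_assoc]
    rw [this]
    exact rowSpace_mul_le _ _
  · have : E * Hm = (E * G' * L) * (E * (G * Hm)) := by
      rw [Matrix.mul_assoc (E * G'), ← Matrix.mul_assoc L, hL, Matrix.one_mul, Matrix.mul_assoc,
        ← Matrix.mul_assoc G', hG, Matrix.one_mul]
    conv_lhs => rw [this]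
    exact rowSpace_mul_le _ _

/-- if T ≥ M and the LOC is row-space symmetric, then it has a
unique subspace degradation. -/
theorem row_space_symmetric_implies_unique_subspace_degradation
    {F : Type} [Field F] [Fintype F] (T M N : ℕ) (hTM : M ≤ T)
    (pH : Matrix (Fin M) (Fin N) F → ℝ) (hpH : IsPMF pH)
    (hrss : RowSpaceSymmetric T pH) :
    UniqueSubspaceDegradation T pH := by
  intro V X X' h
  obtain ⟨G, G', h1, h2, rfl⟩ := exists_unit_of_colSpace_eq X X' h
  unfold prColY
  symm
  refine Fintype.sum_equiv ⟨fun A => G * A, fun A => G' * A, fun A => ?_, fun A => ?_⟩ _ _ ?_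
  · simp [← Matrix.mul_assoc, h2]
  · simp [← Matrix.mul_assoc, h1]
  · intro A
    simp only [Equiv.coe_fn_mk]
    rw [pH_mul_unit hTM pH hrss G G' h2, Matrix.mul_assoc]

end
end

section
/- LOC(H,T) has a unique subspace degradation if and only if Pr{⟨XH⟩ = V} = Pr{⟨X'H⟩ = V'} for all X, X' ∈ F^{T×M} and all subspaces V, V' of F^T satisfying dim(V) = dim(V'), rank(X) = rank(X'), V ⊆ ⟨X⟩ and V' ⊆ ⟨X'⟩. -/
open scoped Classical
open Finset Matrix Module

noncomputable section

variable {F : Type} [Field F] [Fintype F]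

theorem exists_extend_equiv_aux {F E E' : Type*} [Field F] [AddCommGroup E] [Module F E]
    [AddCommGroup E'] [Module F E'] [FiniteDimensional F E] [FiniteDimensional F E']
    (h : Module.finrank F E = Module.finrank F E')
    (V : Submodule F E) (V' : Submodule F E') (e : V ≃ₗ[F] V') :
    ∃ f : E ≃ₗ[F] E', ∀ x : V, f x = e x := by
  obtain ⟨W, hW⟩ := V.exists_isCompl
  obtain ⟨W', hW'⟩ := V'.exists_isCompl
  have h1 := Submodule.finrank_add_eq_of_isCompl hW
  have h2 := Submodule.finrank_add_eq_of_isCompl hW'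
  have h3 := e.finrank_eq
  have h4 : Module.finrank F W = Module.finrank F W' := by omega
  let g : W ≃ₗ[F] W' := LinearEquiv.ofFinrankEq _ _ h4
  refine ⟨(Submodule.prodEquivOfIsCompl V W hW).symm ≪≫ₗ (e.prodCongr g) ≪≫ₗ
    Submodule.prodEquivOfIsCompl V' W' hW', fun x => ?_⟩
  simp

theorem exists_equiv_map_aux {F E : Type*} [Field F] [AddCommGroup E] [Module F E]
    [FiniteDimensional F E] (V U V' U' : Submodule F E) (hV : V ≤ U) (hV' : V' ≤ U')
    (h1 : Module.finrank F V = Module.finrank F V')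
    (h2 : Module.finrank F U = Module.finrank F U') :
    ∃ f : E ≃ₗ[F] E, V.map f.toLinearMap = V' ∧ U.map f.toLinearMap = U' := by
  let a := Submodule.submoduleOfEquivOfLe hV
  let b := Submodule.submoduleOfEquivOfLe hV'
  obtain ⟨g, hg⟩ := exists_extend_equiv_aux h2 _ _
    (a ≪≫ₗ LinearEquiv.ofFinrankEq V V' h1 ≪≫ₗ b.symm)
  obtain ⟨f, hf⟩ := exists_extend_equiv_aux rfl U U' g
  have key : ∀ A B : Submodule F E, Module.finrank F A = Module.finrank F B →
      (∀ x ∈ A, f x ∈ B) → A.map f.toLinearMap = B := by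
    intro A B hAB hx
    apply Submodule.eq_of_le_of_finrank_eq
    · rintro _ ⟨x, hxA, rfl⟩
      exact hx x hxA
    · rw [← hAB]; exact LinearEquiv.finrank_map_eq f A
  refine ⟨f, key _ _ h1 ?_, key _ _ h2 ?_⟩
  · intro x hx
    have e1 := hf ⟨x, hV hx⟩
    have e2 := hg ⟨⟨x, hV hx⟩, hx⟩
    simp only at e1 e2
    rw [e1, e2]
    exact Subtype.prop ((a ≪≫ₗ LinearEquiv.ofFinrankEq V V' h1 ≪≫ₗ b.symm) ⟨⟨x, hV hx⟩, hx⟩)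
  · intro x hx
    have e1 := hf ⟨x, hx⟩
    simp only at e1
    rw [e1]
    exact Subtype.prop _

theorem colSpace_mul_aux {k m n : ℕ} (A : Matrix (Fin k) (Fin m) F) (B : Matrix (Fin m) (Fin n) F) :
    colSpace (A * B) = (colSpace B).map A.mulVecLin := by
  unfold colSpace
  rw [Matrix.mulVecLin_mul, LinearMap.range_comp]

/-- a LOC has a unique subspace degradation iff
Pr{⟨XH⟩ = V} = Pr{⟨X'H⟩ = V'} whenever dim V = dim V', rank X = rank X',
V ⊆ ⟨X⟩ and V' ⊆ ⟨X'⟩. -/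
theorem unique_subspace_degradation_iff
    {F : Type} [Field F] [Fintype F] (T M N : ℕ)
    (pH : Matrix (Fin M) (Fin N) F → ℝ) (hpH : IsPMF pH) :
    UniqueSubspaceDegradation T pH ↔
      ∀ (X X' : Matrix (Fin T) (Fin M) F) (V V' : Submodule F (Fin T → F)),
        Module.finrank F V = Module.finrank F V' → X.rank = X'.rank →
        V ≤ colSpace X → V' ≤ colSpace X' →
        prColY T pH X V = prColY T pH X' V' := by
  constructor
  · intro h X X' V V' hVV hXX hV hV'
    obtain ⟨f, hf1, hf2⟩ := exists_equiv_map_aux V (colSpace X) V' (colSpace X') hV hV' hVV hXX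
    have hP : (LinearMap.toMatrix' f.toLinearMap).mulVecLin = f.toLinearMap := by
      rw [← Matrix.toLin'_apply', Matrix.toLin'_toMatrix']
    rw [← h V' (LinearMap.toMatrix' f.toLinearMap * X) X' (by rw [colSpace_mul_aux, hP, hf2])]
    unfold prColY
    refine Finset.sum_congr rfl fun Hm _ => ?_
    have : colSpace (LinearMap.toMatrix' f.toLinearMap * X * Hm) = V' ↔ colSpace (X * Hm) = V := by
      rw [Matrix.mul_assoc, colSpace_mul_aux, hP, ← hf1]
      exact (Submodule.map_injective_of_injective f.injective).eq_iff
    simp only [this]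
  · intro h V X X' hXX
    by_cases hV : V ≤ colSpace X
    · refine h X X' V V rfl ?_ hV (hXX ▸ hV)
      exact congrArg (fun U : Submodule F (Fin T → F) => Module.finrank F U) hXX
    · have key : ∀ Z : Matrix (Fin T) (Fin M) F, colSpace Z = colSpace X →
          prColY T pH Z V = 0 := by
        intro Z hZ
        unfold prColY
        refine Finset.sum_eq_zero fun Hm _ => if_neg ?_
        rintro rfl
        apply hV
        rw [← hZ]
        unfold colSpace
        rw [Matrix.mulVecLin_mul]
        exact LinearMap.range_comp_le_range _ _
      rw [key X rfl, key X' hXX.symm]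

end
end

section
/- If LOC(H,T) is degraded, then it has a unique subspace degradation and it is row-space symmetric. -/
open scoped Classical
open Finset Matrix Module

noncomputable section

variable {F : Type} [Field F] [Fintype F]

lemma extend_equiv {V W : Type*} [AddCommGroup V] [AddCommGroup W] [Module F V] [Module F W]
    [FiniteDimensional F V] [FiniteDimensional F W] (h : finrank F V = finrank F W)
    (S : Submodule F V) (f : S →ₗ[F] W) (hf : Function.Injective f) :
    ∃ e : V ≃ₗ[F] W, ∀ s : S, e s = f s := by
  obtain ⟨C, hC⟩ := Submodule.exists_isCompl S
  obtain ⟨D, hD⟩ := Submodule.exists_isCompl (LinearMap.range f)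
  have h1 := Submodule.finrank_add_eq_of_isCompl hC
  have h2 := Submodule.finrank_add_eq_of_isCompl hD
  have h3 := LinearMap.finrank_range_of_inj hf
  have h4 : finrank F C = finrank F D := by omega
  let g := LinearEquiv.ofFinrankEq C D h4
  refine ⟨(Submodule.prodEquivOfIsCompl S C hC).symm.trans
    (((LinearEquiv.ofInjective f hf).prodCongr g).trans
      (Submodule.prodEquivOfIsCompl _ D hD)), fun s => ?_⟩
  simp

lemma mutual_h (a b : ℝ) (ha : 0 ≤ a) (hb : 0 ≤ b) :
    0 ≤ a * Real.log (2 * a / (a + b)) + b * Real.log (2 * b / (a + b)) ∧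
    (a * Real.log (2 * a / (a + b)) + b * Real.log (2 * b / (a + b)) = 0 → a = b) := by
  have key : ∀ a b : ℝ, 0 ≤ a → 0 ≤ b → (a - b) / 2 ≤ a * Real.log (2 * a / (a + b)) ∧
      (0 < a → a ≠ b → (a - b) / 2 < a * Real.log (2 * a / (a + b))) := by
    intro a b ha hb
    have st : 0 < a → a ≠ b → (a - b) / 2 < a * Real.log (2 * a / (a + b)) := by
      intro ha hab
      have h : Real.log ((a + b) / (2 * a)) < (a + b) / (2 * a) - 1 := by
        apply Real.log_lt_sub_one_of_pos (by positivity)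
        rw [Ne, div_eq_one_iff_eq (by positivity)]
        intro h; apply hab; linarith
      rw [← inv_div (a + b) (2 * a), Real.log_inv]
      have h2 : a * ((a + b) / (2 * a) - 1) = (b - a) / 2 := by field_simp; ring
      nlinarith [mul_lt_mul_of_pos_left h ha]
    refine ⟨?_, st⟩
    rcases ha.eq_or_lt with rfl | ha
    · simp; linarith
    · by_cases hab : a = b
      · subst hab
        rw [show 2 * a / (a + a) = 1 by field_simp; ring]; simp
      · exact (st ha hab).le
  have h1 := key a b ha hb
  have h2 := key b a hb ha
  rw [add_comm b a] at h2
  refine ⟨by linarith [h1.1, h2.1], fun h => ?_⟩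
  by_contra hab
  rcases ha.eq_or_lt with rfl | ha
  · linarith [h1.1, h2.2 (lt_of_le_of_ne hb hab) (Ne.symm hab)]
  · linarith [h1.2 ha hab, h2.1]

lemma sum_prXY {T M N : ℕ} (pH : Matrix (Fin M) (Fin N) F → ℝ)
    (X : Matrix (Fin T) (Fin M) F) (φ : Matrix (Fin T) (Fin N) F → ℝ) :
    ∑ H, pH H * φ (X * H) = ∑ Y, prXY pH X Y * φ Y := by
  unfold prXY
  simp_rw [Finset.sum_mul]
  rw [Finset.sum_comm]
  refine Finset.sum_congr rfl fun H _ => ?_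
  simp [ite_mul]

lemma mi_eq {Ω A B : Type*} [Fintype Ω] (p : Ω → ℝ) (f : Ω → A) (g : Ω → B) (J P Q : Ω → ℝ)
    (hJ : ∀ ω, (∑ ω', if f ω' = f ω ∧ g ω' = g ω then p ω' else 0) = J ω)
    (hP : ∀ ω, (∑ ω', if f ω' = f ω then p ω' else 0) = P ω)
    (hQ : ∀ ω, (∑ ω', if g ω' = g ω then p ω' else 0) = Q ω) :
    mutualInfo p f g = ∑ ω, p ω * Real.logb 2 (J ω / (P ω * Q ω)) := by
  simp only [mutualInfo, hJ, hP, hQ]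

lemma step1 {T M N : ℕ}
    (pH : Matrix (Fin M) (Fin N) F → ℝ) (hpH : IsPMF pH)
    (hdeg : ∀ pX : Matrix (Fin T) (Fin M) F → ℝ, IsPMF pX →
      miXY pX pH = miColCol pX pH) (A B : Matrix (Fin T) (Fin M) F)
    (hAB : colSpace A = colSpace B) (Y : Matrix (Fin T) (Fin N) F) :
    prXY pH A Y = prXY pH B Y := by
  by_cases hne : A = B
  · rw [hne]
  let pX : Matrix (Fin T) (Fin M) F → ℝ := fun x => if x = A ∨ x = B then 1 / 2 else 0
  have hsum : ∀ φ : Matrix (Fin T) (Fin M) F → ℝ,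
      ∑ x, pX x * φ x = 1 / 2 * φ A + 1 / 2 * φ B := by
    intro φ
    rw [← Finset.sum_subset (Finset.subset_univ {A, B}), Finset.sum_pair hne]
    · simp [pX]
    · intro x _ hx
      simp only [Finset.mem_insert, Finset.mem_singleton] at hx
      simp [pX, hx]
  have hpX : IsPMF pX := by
    constructor
    · intro x; simp only [pX]; split_ifs <;> norm_num
    · have := hsum (fun _ => 1)
      simp only [mul_one] at this
      rw [this]; norm_num
  have hd := hdeg pX hpX
  have hz : miColCol pX pH = 0 := by
    unfold miColCol mutualInfo
    refine Finset.sum_eq_zero fun ω _ => ?_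
    by_cases hω : ω.1 = A ∨ ω.1 = B
    · have hc : colSpace ω.1 = colSpace A := by
        rcases hω with h | h <;> rw [h]
        exact hAB.symm
      have hp : ∀ ω' : Matrix (Fin T) (Fin M) F × Matrix (Fin M) (Fin N) F,
          colSpace ω'.1 ≠ colSpace A → jointPMF pX pH ω' = 0 := by
        intro ω' h
        have : ¬ (ω'.1 = A ∨ ω'.1 = B) := by
          rintro (h' | h') <;> apply h <;> rw [h']
          exact hAB.symm
        simp [jointPMF, pX, this]
      have e1 : (∑ ω' : Matrix (Fin T) (Fin M) F × Matrix (Fin M) (Fin N) F,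
          if colSpace ω'.1 = colSpace ω.1 then jointPMF pX pH ω' else 0) = 1 := by
        rw [hc]
        trans ∑ ω', jointPMF pX pH ω'
        · refine Finset.sum_congr rfl fun ω' _ => ?_
          split_ifs with h
          · rfl
          · exact (hp _ h).symm
        · simp only [jointPMF, Fintype.sum_prod_type]
          simp_rw [← Finset.mul_sum, hpH.2, mul_one]
          exact hpX.2
      have e2 : (∑ ω' : Matrix (Fin T) (Fin M) F × Matrix (Fin M) (Fin N) F,
          if colSpace ω'.1 = colSpace ω.1 ∧ colSpace (ω'.1 * ω'.2) = colSpace (ω.1 * ω.2)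
            then jointPMF pX pH ω' else 0) =
          ∑ ω' : Matrix (Fin T) (Fin M) F × Matrix (Fin M) (Fin N) F,
          if colSpace (ω'.1 * ω'.2) = colSpace (ω.1 * ω.2)
            then jointPMF pX pH ω' else 0 := by
        refine Finset.sum_congr rfl fun ω' _ => ?_
        rw [hc]
        by_cases h : colSpace ω'.1 = colSpace A
        · simp [h]
        · simp [h, hp _ h]
      have fin : ∀ c J P Q : ℝ, J = Q → P = 1 → c * Real.logb 2 (J / (P * Q)) = 0 := by
        rintro c J P Q rfl rfl
        rcases eq_or_ne J 0 with h | h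
        · rw [h]; simp
        · rw [one_mul, div_self h]; simp
      apply fin
      · convert e2
      · convert e1
    · simp [jointPMF, pX, hω]
  have hx : miXY pX pH = ∑ Y, (1 / (2 * Real.log 2)) *
      (prXY pH A Y * Real.log (2 * prXY pH A Y / (prXY pH A Y + prXY pH B Y)) +
       prXY pH B Y * Real.log (2 * prXY pH B Y / (prXY pH A Y + prXY pH B Y))) := by
    unfold miXY
    have e3 : ∀ y, (∑ ω' : Matrix (Fin T) (Fin M) F × Matrix (Fin M) (Fin N) F,
        if ω'.1 * ω'.2 = y then jointPMF pX pH ω' else 0) =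
        (prXY pH A y + prXY pH B y) / 2 := by
      intro y
      rw [Fintype.sum_prod_type]
      trans ∑ x, pX x * prXY pH x y
      · refine Finset.sum_congr rfl fun x _ => ?_
        simp only [prXY, jointPMF, Finset.mul_sum, mul_ite, mul_zero]
      · rw [hsum]; ring
    have e1 : ∀ x, (∑ ω' : Matrix (Fin T) (Fin M) F × Matrix (Fin M) (Fin N) F,
        if ω'.1 = x then jointPMF pX pH ω' else 0) = pX x := by
      intro x
      rw [Fintype.sum_prod_type, Finset.sum_eq_single x]
      · simp [jointPMF, ← Finset.mul_sum, hpH.2]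
      · intro b _ hb; simp [hb]
      · simp
    have e2 : ∀ x y, (∑ ω' : Matrix (Fin T) (Fin M) F × Matrix (Fin M) (Fin N) F,
        if ω'.1 = x ∧ ω'.1 * ω'.2 = y then jointPMF pX pH ω' else 0) =
        pX x * prXY pH x y := by
      intro x y
      rw [Fintype.sum_prod_type, Finset.sum_eq_single x]
      · simp only [true_and, prXY, jointPMF, Finset.mul_sum, mul_ite, mul_zero]
      · intro b _ hb; simp [hb]
      · simp
    rw [mi_eq _ _ _ (fun ω => pX ω.1 * prXY pH ω.1 (ω.1 * ω.2)) (fun ω => pX ω.1)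
      (fun ω => (prXY pH A (ω.1 * ω.2) + prXY pH B (ω.1 * ω.2)) / 2)
      (fun ω => by convert e2 ω.1 (ω.1 * ω.2)) (fun ω => by convert e1 ω.1)
      (fun ω => by convert e3 (ω.1 * ω.2))]
    rw [Fintype.sum_prod_type]
    simp only [jointPMF, mul_assoc]
    simp_rw [← Finset.mul_sum]
    have := fun x => sum_prXY pH x (fun y => Real.logb 2
      (pX x * prXY pH x y / (pX x * ((prXY pH A y + prXY pH B y) / 2))))
    simp only [this]
    rw [hsum]
    have pA : pX A = 1 / 2 := by simp [pX]
    have pB : pX B = 1 / 2 := by simp [pX]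
    have hr : ∀ a c : ℝ, Real.logb 2 (1 / 2 * a / (1 / 2 * (c / 2))) =
        Real.log (2 * a / c) / Real.log 2 := by
      intro a c
      rw [Real.logb]
      congr 2
      rw [mul_div_mul_left _ _ (by norm_num), div_div_eq_mul_div, mul_comm]
    rw [pA, pB, Finset.mul_sum, Finset.mul_sum, ← Finset.sum_add_distrib, Finset.mul_sum]
    refine Finset.sum_congr rfl fun y _ => ?_
    rw [hr, hr]
    have : Real.log 2 ≠ 0 := (Real.log_pos (by norm_num)).ne'
    field_simp
  have hnn : ∀ X : Matrix (Fin T) (Fin M) F, ∀ Y, 0 ≤ prXY pH X Y := by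
    intro X Y
    refine Finset.sum_nonneg fun H _ => ?_
    split_ifs
    · exact hpH.1 H
    · exact le_rfl
  have hl : 0 < 1 / (2 * Real.log 2) := by
    have := Real.log_pos (one_lt_two); positivity
  rw [hz, hx, Finset.sum_eq_zero_iff_of_nonneg] at hd
  · have := hd Y (Finset.mem_univ _)
    rcases mul_eq_zero.1 this with h | h
    · exact absurd h hl.ne'
    · exact (mutual_h _ _ (hnn _ _) (hnn _ _)).2 h
  · intro y _
    exact mul_nonneg hl.le (mutual_h _ _ (hnn _ _) (hnn _ _)).1

lemma exists_left {T N : ℕ} (Y Y' : Matrix (Fin T) (Fin N) F)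
    (h : rowSpace Y' ≤ rowSpace Y) : ∃ P : Matrix (Fin T) (Fin T) F, Y' = P * Y := by
  have : ∀ i, ∃ v, Yᵀ *ᵥ v = Y' i := by
    intro i
    have : Y' i ∈ rowSpace Y' := ⟨Pi.single i 1, by ext j; simp⟩
    obtain ⟨v, hv⟩ := h this
    exact ⟨v, hv⟩
  choose P hP using this
  refine ⟨Matrix.of P, ?_⟩
  ext i j
  rw [← hP i]
  simp [Matrix.mulVec, dotProduct, Matrix.mul_apply, mul_comm]

lemma finrank_colSpace {T M : ℕ} (X X' : Matrix (Fin T) (Fin M) F)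
    (h : rowSpace X = rowSpace X') : finrank F (colSpace X) = finrank F (colSpace X') := by
  change X.rank = X'.rank
  rw [← Matrix.rank_transpose X, ← Matrix.rank_transpose X']
  change finrank F (rowSpace X) = finrank F (rowSpace X')
  rw [h]

lemma colSpace_mul {T M : ℕ} (P : Matrix (Fin T) (Fin T) F) (X : Matrix (Fin T) (Fin M) F) :
    colSpace (P * X) = (colSpace X).map P.mulVecLin := by
  simp [colSpace, Matrix.mulVecLin_mul, LinearMap.range_comp]

lemma exists_psi {T M N : ℕ} (X X' : Matrix (Fin T) (Fin M) F) (Y Y' : Matrix (Fin T) (Fin N) F)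
    (hY : colSpace Y ≤ colSpace X) (hY' : colSpace Y' ≤ colSpace X')
    (hX : rowSpace X = rowSpace X') (hr : rowSpace Y = rowSpace Y') :
    ∃ P : Matrix (Fin T) (Fin T) F, IsUnit P ∧ P * Y = Y' ∧ colSpace (P * X) = colSpace X' := by
  obtain ⟨Q, hQ⟩ := exists_left Y Y' hr.ge
  obtain ⟨R, hR⟩ := exists_left Y' Y hr.le
  let S : Submodule F (colSpace X) := (colSpace Y).comap (colSpace X).subtype
  have hmem : ∀ s : S, Q *ᵥ (s.1.1) ∈ colSpace X' := by
    rintro ⟨⟨s, hs⟩, hs'⟩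
    apply hY'
    rw [hQ, colSpace_mul]
    exact ⟨s, hs', rfl⟩
  let f : S →ₗ[F] colSpace X' := LinearMap.codRestrict _
    (Q.mulVecLin ∘ₗ (colSpace X).subtype ∘ₗ S.subtype) hmem
  have hf : Function.Injective f := by
    have hinv : ∀ s ∈ colSpace Y, R *ᵥ (Q *ᵥ s) = s := by
      rintro s ⟨v, hv⟩
      have hv : Y *ᵥ v = s := hv
      rw [← hv, Matrix.mulVec_mulVec, Matrix.mulVec_mulVec, Matrix.mul_assoc, ← hQ, ← hR]
    rintro ⟨⟨s, hs⟩, hs'⟩ ⟨⟨t, ht⟩, ht'⟩ h0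
    have h1 : Q *ᵥ s = Q *ᵥ t := congrArg Subtype.val h0
    have : s = t := by
      rw [← hinv s hs', h1, hinv t ht']
    subst this; rfl
  obtain ⟨e, he⟩ := extend_equiv (finrank_colSpace X X' hX) S f hf
  obtain ⟨E, hE⟩ := extend_equiv (V := Fin T → F) (W := Fin T → F) rfl (colSpace X)
    ((colSpace X').subtype ∘ₗ e.toLinearMap)
    ((Submodule.injective_subtype _).comp e.injective)
  have hP : ∀ v, (LinearMap.toMatrix' E.toLinearMap) *ᵥ v = E v := by
    intro v; simp [LinearMap.toMatrix'_mulVec]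
  refine ⟨LinearMap.toMatrix' E.toLinearMap, ?_, ?_, ?_⟩
  · refine IsUnit.of_mul_eq_one (LinearMap.toMatrix' E.symm.toLinearMap) ?_
    rw [← LinearMap.toMatrix'_comp]; simp
  · apply Matrix.toLin'.injective
    ext1 j
    ext1
    simp only [LinearMap.comp_apply, Matrix.toLin'_apply]
    rw [← Matrix.mulVec_mulVec, hP, hQ, ← Matrix.mulVec_mulVec]
    generalize (LinearMap.single F (fun _ => F) j) 1 = v
    have hm : Y *ᵥ v ∈ colSpace Y := ⟨v, rfl⟩
    have h1 := hE ⟨Y *ᵥ v, hY hm⟩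
    have h2 := he ⟨⟨Y *ᵥ v, hY hm⟩, hm⟩
    simp only [LinearMap.comp_apply, LinearEquiv.coe_coe] at h1
    rw [h1, h2]
    rfl
  · rw [colSpace_mul]
    ext w
    constructor
    · rintro ⟨v, hv, rfl⟩
      have h1 := hE ⟨v, hv⟩
      rw [Matrix.mulVecLin_apply, hP, h1]
      exact (e ⟨v, hv⟩).2
    · intro hw
      refine ⟨e.symm ⟨w, hw⟩, (e.symm ⟨w, hw⟩).2, ?_⟩
      rw [Matrix.mulVecLin_apply, hP, hE]
      simp

/-- a degraded LOC has a unique subspace degradation and is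
row-space symmetric. -/
theorem degraded_implies_usd_and_rss
    {F : Type} [Field F] [Fintype F] (T M N : ℕ)
    (pH : Matrix (Fin M) (Fin N) F → ℝ) (hpH : IsPMF pH)
    (hdeg : ∀ pX : Matrix (Fin T) (Fin M) F → ℝ, IsPMF pX →
      miXY pX pH = miColCol pX pH) :
    UniqueSubspaceDegradation T pH ∧ RowSpaceSymmetric T pH := by
  have key := step1 pH hpH hdeg
  constructor
  · intro V X X' h
    have : ∀ X : Matrix (Fin T) (Fin M) F, prColY T pH X V =
        ∑ Y, prXY pH X Y * (if colSpace Y = V then 1 else 0) := by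
      intro X
      rw [← sum_prXY pH X (fun Y => if colSpace Y = V then 1 else 0)]
      simp [prColY]
    rw [this, this]
    exact Finset.sum_congr rfl fun Y _ => by rw [key X X' h]
  · intro X X' Y Y' hY hY' hX hr
    obtain ⟨P, hu, hPY, hPX⟩ := exists_psi X X' Y Y' hY hY' hX hr
    rw [← key _ _ hPX, ← hPY]
    unfold prXY
    refine Finset.sum_congr rfl fun H _ => ?_
    have : P * X * H = P * Y ↔ X * H = Y := by
      rw [Matrix.mul_assoc]
      constructor
      · intro h
        obtain ⟨Q, hQ⟩ := hu.exists_left_inv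
        have := congrArg (Q * ·) h
        simpa [← Matrix.mul_assoc, hQ] using this
      · rintro rfl; rfl
    simp only [this]

end
end

section
/- If LOC(H,T) is rank symmetric, then it is degraded; that is, I(X;Y) = I(⟨X⟩;⟨Y⟩) for every input PMF p_X on F^{T×M}, where Y = XH. -/
open scoped Classical
open Finset Matrix Module

noncomputable section

variable {F : Type} [Field F] [Fintype F]

lemma sum_joint {T M N : ℕ} (pX : Matrix (Fin T) (Fin M) F → ℝ)
    (pH : Matrix (Fin M) (Fin N) F → ℝ)
    (a : Matrix (Fin T) (Fin M) F → Prop) (b : Matrix (Fin T) (Fin N) F → Prop) :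
    (∑ ω : Matrix (Fin T) (Fin M) F × Matrix (Fin M) (Fin N) F,
      if a ω.1 ∧ b (ω.1 * ω.2) then jointPMF pX pH ω else 0) =
    ∑ X, (if a X then pX X else 0) * ∑ Y, (if b Y then 1 else 0) * prXY pH X Y := by
  rw [Fintype.sum_prod_type]
  refine Finset.sum_congr rfl fun X _ => ?_
  have h : (∑ Y, (if b Y then (1:ℝ) else 0) * prXY pH X Y)
      = ∑ Hm, if b (X * Hm) then pH Hm else 0 := by
    unfold prXY
    simp_rw [Finset.mul_sum]
    rw [Finset.sum_comm]
    refine Finset.sum_congr rfl fun Hm _ => ?_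
    rw [Finset.sum_eq_single (X * Hm)]
    · simp
    · intro Y _ hY
      simp [Ne.symm hY]
    · simp
  rw [h, Finset.mul_sum]
  refine Finset.sum_congr rfl fun Hm _ => ?_
  by_cases h1 : a X <;> by_cases h2 : b (X * Hm) <;> simp [h1, h2, jointPMF]

lemma sum_joint_left {T M N : ℕ} (pX : Matrix (Fin T) (Fin M) F → ℝ)
    (pH : Matrix (Fin M) (Fin N) F → ℝ) (hpH : IsPMF pH)
    (a : Matrix (Fin T) (Fin M) F → Prop) :
    (∑ ω : Matrix (Fin T) (Fin M) F × Matrix (Fin M) (Fin N) F,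
      if a ω.1 then jointPMF pX pH ω else 0) = ∑ X, (if a X then pX X else 0) := by
  rw [Fintype.sum_prod_type]
  refine Finset.sum_congr rfl fun X _ => ?_
  by_cases h1 : a X
  · simp only [h1, if_true, jointPMF]
    rw [← Finset.mul_sum, hpH.2, mul_one]
  · simp [h1]

/-- a rank-symmetric LOC is degraded: I(X;Y) = I(⟨X⟩;⟨Y⟩)
for every input PMF. -/
theorem rank_symmetric_implies_degraded
    {F : Type} [Field F] [Fintype F] (T M N : ℕ)
    (pH : Matrix (Fin M) (Fin N) F → ℝ) (hpH : IsPMF pH)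
    (hrs : RankSymmetric T pH) :
    ∀ pX : Matrix (Fin T) (Fin M) F → ℝ, IsPMF pX →
      miXY pX pH = miColCol pX pH := by
  intro pX hpX
  obtain ⟨μ, -, hμ⟩ := hrs
  obtain ⟨K, hK⟩ : ∃ K : Submodule F (Fin T → F) → Submodule F (Fin T → F) → ℝ,
      ∀ (X : Matrix (Fin T) (Fin M) F) (Y : Matrix (Fin T) (Fin N) F),
        prXY pH X Y = K (colSpace X) (colSpace Y) :=
    ⟨fun U V => if V ≤ U then μ (finrank F U) (finrank F V) else 0, fun X Y => hμ X Y⟩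
  unfold miXY miColCol mutualInfo
  refine Finset.sum_congr rfl fun ω _ => ?_
  obtain ⟨X0, H0⟩ := ω
  by_cases hp : pX X0 = 0
  · simp [jointPMF, hp]
  have hp0 : 0 < pX X0 := lt_of_le_of_ne (hpX.1 X0) (Ne.symm hp)
  congr 2
  have e1 := sum_joint pX pH (fun X => X = X0) (fun Y => Y = X0 * H0)
  have e2 := sum_joint_left pX pH hpH (fun X => X = X0)
  have e3 := sum_joint pX pH (fun _ => True) (fun Y => Y = X0 * H0)
  have f1 := sum_joint pX pH (fun X => colSpace X = colSpace X0)
    (fun Y => colSpace Y = colSpace (X0 * H0))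
  have f2 := sum_joint_left pX pH hpH (fun X => colSpace X = colSpace X0)
  have f3 := sum_joint pX pH (fun _ => True) (fun Y => colSpace Y = colSpace (X0 * H0))
  set V := colSpace (X0 * H0) with hV
  set A := ∑ X, (@ite ℝ (colSpace X = colSpace X0) (Classical.propDecidable _) (pX X) 0) with hA
  set n : ℝ := ∑ Y : Matrix (Fin T) (Fin N) F, (@ite ℝ (colSpace Y = V) (Classical.propDecidable _) 1 0) with hn
  have hA0 : 0 < A := by
    refine Finset.sum_pos' (fun X _ => ?_) ⟨X0, Finset.mem_univ _, by simpa using hp0⟩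
    split_ifs
    · exact hpX.1 X
    · exact le_rfl
  have hn0 : 0 < n := by
    refine Finset.sum_pos' (fun X _ => ?_) ⟨X0 * H0, Finset.mem_univ _, by simp [hV]⟩
    split_ifs <;> norm_num
  have g1 : ∀ X : Matrix (Fin T) (Fin M) F,
      (∑ Y, (@ite ℝ (Y = X0 * H0) (Classical.propDecidable _) 1 0) * prXY pH X Y) = K (colSpace X) V := by
    intro X
    rw [Finset.sum_eq_single (X0 * H0)]
    · simp [hK, hV]
    · intro Y _ hY
      simp [hY]
    · simp
  have g2 : ∀ X : Matrix (Fin T) (Fin M) F,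
      (∑ Y, (@ite ℝ (colSpace Y = V) (Classical.propDecidable _) 1 0) * prXY pH X Y)
        = n * K (colSpace X) V := by
    intro X
    rw [hn, Finset.sum_mul]
    refine Finset.sum_congr rfl fun Y _ => ?_
    by_cases h : colSpace Y = V
    · simp [h, hK]
    · simp [h]
  simp only [g1] at e1 e3
  simp only [g2] at f1 f3
  have e1' : (∑ X, (@ite ℝ (X = X0) (Classical.propDecidable _) (pX X) 0) * K (colSpace X) V)
      = pX X0 * K (colSpace X0) V := by
    rw [Finset.sum_eq_single X0]
    · simp
    · intro X _ hX
      simp [hX]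
    · simp
  have e2' : (∑ X, (@ite ℝ (X = X0) (Classical.propDecidable _) (pX X) 0)) = pX X0 := by
    rw [Finset.sum_eq_single X0]
    · simp
    · intro X _ hX
      simp [hX]
    · simp
  have f1' : (∑ X, (@ite ℝ (colSpace X = colSpace X0) (Classical.propDecidable _) (pX X) 0) * (n * K (colSpace X) V))
      = A * (n * K (colSpace X0) V) := by
    rw [hA, Finset.sum_mul]
    refine Finset.sum_congr rfl fun X _ => ?_
    by_cases h : colSpace X = colSpace X0
    · simp [h]
    · simp [h]
  have f3' : (∑ X, (@ite ℝ True (Classical.propDecidable _) (pX X) 0) * (n * K (colSpace X) V))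
      = n * ∑ X, (@ite ℝ True (Classical.propDecidable _) (pX X) 0) * K (colSpace X) V := by
    rw [Finset.mul_sum]
    refine Finset.sum_congr rfl fun X _ => ?_
    ring
  rw [e1'] at e1
  rw [e2'] at e2
  rw [f1'] at f1
  rw [f3'] at f3
  simp only [true_and] at e3 f3
  trans (pX X0 * K (colSpace X0) V) /
    (pX X0 * ∑ X, (@ite ℝ True (Classical.propDecidable _) (pX X) 0) * K (colSpace X) V)
  · refine Eq.trans ?_ (congrArg₂ (· / ·) e1 (congrArg₂ (· * ·) e2 e3))
    beta_reduce
    congr!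
  trans (A * (n * K (colSpace X0) V)) /
    (A * (n * ∑ X, (@ite ℝ True (Classical.propDecidable _) (pX X) 0) * K (colSpace X) V))
  · rw [mul_div_mul_left _ _ hp, mul_div_mul_left _ _ hA0.ne', mul_div_mul_left _ _ hn0.ne']
  · symm
    refine Eq.trans ?_ (congrArg₂ (· / ·) f1 (congrArg₂ (· * ·) f2 f3))
    beta_reduce
    congr!

end
end

section
/- Let H be a random M×N matrix over F. (i) If T ≥ M and LOC(H,T) is rank symmetric, then H is uniform given rank. (ii) Conversely, if H is uniform given rank, then LOC(H,T) is rank symmetric for every positive integer T. -/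
open scoped Classical
open Finset Matrix Module

noncomputable section

variable {F : Type} [Field F] [Fintype F]

/-- H is uniform given rank: p_H(𝐇) = Pr{rank H = rank 𝐇} / χ_{M,N}[rank 𝐇]. -/
def UniformGivenRank {F : Type} [Field F] [Fintype F] (q : ℕ) {M N : ℕ}
    (pH : Matrix (Fin M) (Fin N) F → ℝ) : Prop :=
  ∀ Hm : Matrix (Fin M) (Fin N) F,
    pH Hm = (∑ H' : Matrix (Fin M) (Fin N) F, if H'.rank = Hm.rank then pH H' else 0)
      / ((chi q M Hm.rank : ℝ) * (chi q N Hm.rank : ℝ) / (chi q Hm.rank Hm.rank : ℝ))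

section Helpers

variable {K V V' W : Type*} [Field K] [AddCommGroup V] [Module K V] [AddCommGroup V'] [Module K V']
  [AddCommGroup W] [Module K W]

/-- A surjection splits the domain as range times kernel. -/
lemma loc_split (f : V →ₗ[K] W) (hf : Function.Surjective f) :
    ∃ e : V ≃ₗ[K] W × LinearMap.ker f, ∀ v, (e v).1 = f v := by
  obtain ⟨p, hp⟩ := LinearMap.exists_leftInverse_of_injective (LinearMap.ker f).subtype
    (by simp)
  have hp' : ∀ x : LinearMap.ker f, p x = x := fun x => LinearMap.congr_fun hp x
  refine ⟨LinearEquiv.ofBijective (f.prod p) ⟨?_, ?_⟩, fun v => rfl⟩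
  · rw [← LinearMap.ker_eq_bot, LinearMap.ker_eq_bot']
    intro m hm
    replace hm : f m = 0 ∧ p m = 0 := Prod.mk_eq_zero.1 hm
    have := hp' ⟨m, hm.1⟩
    exact congrArg Subtype.val (this.symm.trans hm.2)
  · rintro ⟨w, k⟩
    obtain ⟨v, rfl⟩ := hf w
    refine ⟨v - (p v : V) + (k : V), ?_⟩
    have h1 : f (p v : V) = 0 := (p v).2
    have h2 : f (k : V) = 0 := k.2
    simp [h1, h2, hp']

/-- Two maps with the same range differ by an automorphism of the source. -/
lemma loc_same_range [FiniteDimensional K V] (f f' : V →ₗ[K] W)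
    (h : LinearMap.range f = LinearMap.range f') :
    ∃ e : V ≃ₗ[K] V, ∀ v, f (e v) = f' v := by
  obtain ⟨e1, h1⟩ := loc_split f.rangeRestrict f.surjective_rangeRestrict
  obtain ⟨e2, h2⟩ := loc_split f'.rangeRestrict f'.surjective_rangeRestrict
  have hd1 := LinearMap.finrank_range_add_finrank_ker f
  have hd2 := LinearMap.finrank_range_add_finrank_ker f'
  rw [h] at hd1
  have hk : finrank K (LinearMap.ker f'.rangeRestrict) = finrank K (LinearMap.ker f.rangeRestrict) := by
    rw [LinearMap.ker_rangeRestrict, LinearMap.ker_rangeRestrict]; omega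
  let k := LinearEquiv.ofFinrankEq _ _ hk
  let r := LinearEquiv.ofEq _ _ h.symm
  refine ⟨e2.trans ((r.prodCongr k).trans e1.symm), fun v => ?_⟩
  have := h1 (e1.symm ((r.prodCongr k) (e2 v)))
  rw [LinearEquiv.apply_symm_apply] at this
  have h3 := congrArg Subtype.val this
  have h4 := congrArg Subtype.val (h2 v)
  exact h3.symm.trans h4

/-- Extending an isomorphism of subspaces. -/
lemma loc_extend [FiniteDimensional K V] [FiniteDimensional K V']
    (hd : finrank K V = finrank K V') (p : Submodule K V) (p' : Submodule K V')
    (e : p ≃ₗ[K] p') : ∃ E : V ≃ₗ[K] V', ∀ x : p, E x = e x := by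
  obtain ⟨c, hc⟩ := p.exists_isCompl
  obtain ⟨c', hc'⟩ := p'.exists_isCompl
  have h1 := Submodule.finrank_add_eq_of_isCompl hc
  have h2 := Submodule.finrank_add_eq_of_isCompl hc'
  have h3 := e.finrank_eq
  let k : c ≃ₗ[K] c' := LinearEquiv.ofFinrankEq _ _ (by omega)
  refine ⟨(Submodule.prodEquivOfIsCompl p c hc).symm.trans
    ((e.prodCongr k).trans (Submodule.prodEquivOfIsCompl p' c' hc')), fun x => ?_⟩
  simp

/-- Transitivity on two-step flags. -/
lemma loc_flag [FiniteDimensional K V] (A B A' B' : Submodule K V) (hAB : A ≤ B) (hAB' : A' ≤ B')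
    (hA : finrank K A = finrank K A') (hB : finrank K B = finrank K B') :
    ∃ E : V ≃ₗ[K] V, A.map (E : V →ₗ[K] V) = A' ∧ B.map (E : V →ₗ[K] V) = B' := by
  let a := (Submodule.comapSubtypeEquivOfLe hAB).trans
    ((LinearEquiv.ofFinrankEq A A' hA).trans (Submodule.comapSubtypeEquivOfLe hAB').symm)
  obtain ⟨b, hb⟩ := loc_extend hB _ _ a
  obtain ⟨E, hE⟩ := loc_extend rfl B B' b
  have key : ∀ (C C' : Submodule K V), finrank K C = finrank K C' → (∀ x ∈ C, E x ∈ C') →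
      C.map (E : V →ₗ[K] V) = C' := by
    intro C C' hC h
    apply Submodule.eq_of_le_of_finrank_eq
    · rintro _ ⟨x, hx, rfl⟩
      exact h x hx
    · rw [← hC]
      exact LinearEquiv.finrank_map_eq E C
  refine ⟨E, key A A' hA ?_, key B B' hB ?_⟩
  · intro x hx
    have h1 := hE ⟨x, hAB hx⟩
    have h2 := hb ⟨⟨x, hAB hx⟩, hx⟩
    simp only at h1 h2
    rw [h1, h2]
    exact (a ⟨⟨x, hAB hx⟩, hx⟩).2
  · intro x hx
    rw [hE ⟨x, hx⟩]
    exact (b ⟨x, hx⟩).2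

end Helpers

section MatrixHelpers

variable {K : Type} [Field K]

lemma loc_orbit {t m n : ℕ} (X X' : Matrix (Fin t) (Fin m) K) (Y Y' : Matrix (Fin t) (Fin n) K)
    (h : colSpace Y ≤ colSpace X) (h' : colSpace Y' ≤ colSpace X')
    (hX : X.rank = X'.rank) (hY : Y.rank = Y'.rank) :
    ∃ (P Pi : Matrix (Fin t) (Fin t) K) (Q Qi : Matrix (Fin m) (Fin m) K)
      (R Ri : Matrix (Fin n) (Fin n) K),
      Pi * P = 1 ∧ Q * Qi = 1 ∧ R * Ri = 1 ∧ X' = P * X * Q ∧ Y' = P * Y * R := by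
  obtain ⟨E, hE1, hE2⟩ := loc_flag _ _ _ _ h h' hY hX
  have inv : ∀ {k : ℕ} (e : (Fin k → K) ≃ₗ[K] (Fin k → K)),
      LinearMap.toMatrix' (e : (Fin k → K) →ₗ[K] (Fin k → K)) *
        LinearMap.toMatrix' (e.symm : (Fin k → K) →ₗ[K] (Fin k → K)) = 1 := by
    intro k e
    rw [← LinearMap.toMatrix'_comp]
    simp
  have fac : ∀ {k : ℕ} (Z Z' : Matrix (Fin t) (Fin k) K),
      (colSpace Z).map (E : (Fin t → K) →ₗ[K] (Fin t → K)) = colSpace Z' →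
      ∃ Q Qi : Matrix (Fin k) (Fin k) K, Q * Qi = 1 ∧
        Z' = LinearMap.toMatrix' (E : (Fin t → K) →ₗ[K] (Fin t → K)) * Z * Q := by
    intro k Z Z' hZ
    obtain ⟨e, he⟩ := loc_same_range ((E : (Fin t → K) →ₗ[K] (Fin t → K)) ∘ₗ Z.mulVecLin)
      Z'.mulVecLin (by rw [LinearMap.range_comp]; exact hZ)
    refine ⟨_, _, inv e, ?_⟩
    have : Z'.mulVecLin = ((E : (Fin t → K) →ₗ[K] (Fin t → K)) ∘ₗ Z.mulVecLin) ∘ₗ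
        (e : (Fin k → K) →ₗ[K] (Fin k → K)) := by
      ext1 v
      ext1
      simp [← he]
    have h2 := congrArg LinearMap.toMatrix' this
    rw [LinearMap.toMatrix'_comp, LinearMap.toMatrix'_comp] at h2
    simpa [← Matrix.toLin'_apply'] using h2
  obtain ⟨Q, Qi, hQ, hQ'⟩ := fac X X' hE2
  obtain ⟨R, Ri, hR, hR'⟩ := fac Y Y' hE1
  exact ⟨_, _, Q, Qi, R, Ri, inv E.symm, hQ, hR, hQ', hR'⟩

lemma loc_prXY_eq [Fintype K] {t m n : ℕ} (pH : Matrix (Fin m) (Fin n) K → ℝ)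
    (hp : ∀ H H', H.rank = H'.rank → pH H = pH H')
    (X X' : Matrix (Fin t) (Fin m) K) (Y Y' : Matrix (Fin t) (Fin n) K)
    (h : colSpace Y ≤ colSpace X) (h' : colSpace Y' ≤ colSpace X')
    (hX : X.rank = X'.rank) (hY : Y.rank = Y'.rank) : prXY pH X Y = prXY pH X' Y' := by
  obtain ⟨P, Pi, Q, Qi, R, Ri, hP, hQ, hR, rfl, rfl⟩ := loc_orbit X X' Y Y' h h' hX hY
  have hQ' := mul_eq_one_comm.mp hQ
  have hR' := mul_eq_one_comm.mp hR
  let e : Matrix (Fin m) (Fin n) K ≃ Matrix (Fin m) (Fin n) K :=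
    { toFun := fun H => Qi * H * R
      invFun := fun H => Q * H * Ri
      left_inv := fun H => by
        calc Q * (Qi * H * R) * Ri = (Q * Qi) * H * (R * Ri) := by simp only [Matrix.mul_assoc]
          _ = H := by simp [hQ, hR]
      right_inv := fun H => by
        calc Qi * (Q * H * Ri) * R = (Qi * Q) * H * (Ri * R) := by simp only [Matrix.mul_assoc]
          _ = H := by simp [hQ', hR'] }
  unfold prXY
  refine Fintype.sum_equiv e _ _ fun H => ?_
  have h1 : P * X * Q * (e H) = P * (X * H) * R := by
    calc P * X * Q * (Qi * H * R) = P * X * (Q * Qi) * H * R := by simp only [Matrix.mul_assoc]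
      _ = _ := by simp [hQ, Matrix.mul_assoc]
  have h2 : (P * X * Q * (e H) = P * Y * R) ↔ X * H = Y := by
    rw [h1]
    constructor
    · intro h3
      have h4 := congrArg (fun Z => Pi * Z * Ri) h3
      have h5 : ∀ Z : Matrix (Fin t) (Fin n) K, Pi * (P * Z * R) * Ri = Z := fun Z => by
        calc Pi * (P * Z * R) * Ri = (Pi * P) * Z * (R * Ri) := by simp only [Matrix.mul_assoc]
          _ = Z := by simp [hP, hR]
      simpa only [h5] using h4
    · rintro rfl; rfl
  have h3 : pH H = pH (e H) := by
    apply hp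
    change H.rank = (Qi * H * R).rank
    rw [Matrix.rank_mul_eq_left_of_isUnit_det _ _ (Matrix.isUnit_det_of_right_inverse hR),
      Matrix.rank_mul_eq_right_of_isUnit_det _ _ (Matrix.isUnit_det_of_right_inverse hQ')]
  simp only [h2, h3]

lemma loc_colSpace_mul {t m n : ℕ} (X : Matrix (Fin t) (Fin m) K) (H : Matrix (Fin m) (Fin n) K) :
    colSpace (X * H) ≤ colSpace X := by
  unfold colSpace
  rw [Matrix.mulVecLin_mul]
  exact LinearMap.range_comp_le_range _ _

lemma loc_rank_eq_iff {m r : ℕ} (A : Matrix (Fin m) (Fin r) K) :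
    A.rank = r ↔ LinearIndependent K A.col := by
  rw [linearIndependent_iff_card_eq_finrank_span, Set.finrank, ← Matrix.rank_eq_finrank_span_cols,
    Fintype.card_fin, eq_comm]

lemma loc_chi_eq (q m r : ℕ) : chi q m r = ∏ i : Fin r, (q ^ m - q ^ i.val) := by
  unfold chi
  rw [Finset.prod_range]

lemma loc_card_full [Fintype K] {m r : ℕ} (h : r ≤ m) :
    Fintype.card {A : Matrix (Fin m) (Fin r) K // A.rank = r} = chi (Fintype.card K) m r := by
  have := card_linearIndependent (K := K) (V := Fin m → K) (k := r) (by simpa using h)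
  rw [loc_chi_eq]
  simp only [finrank_fin_fun] at this
  rw [← this, ← Nat.card_eq_fintype_card]
  refine Nat.card_congr ⟨fun A => ⟨A.1.col, (loc_rank_eq_iff _).1 A.2⟩,
    fun s => ⟨(Matrix.of s.1)ᵀ, (loc_rank_eq_iff _).2 s.2⟩, fun A => rfl, fun s => rfl⟩

lemma loc_card_full' [Fintype K] {n r : ℕ} (h : r ≤ n) :
    Fintype.card {B : Matrix (Fin r) (Fin n) K // B.rank = r} = chi (Fintype.card K) n r := by
  rw [← loc_card_full (K := K) h]
  refine Fintype.card_congr ⟨fun A => ⟨A.1ᵀ, by rw [Matrix.rank_transpose, A.2]⟩,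
    fun A => ⟨A.1ᵀ, by rw [Matrix.rank_transpose, A.2]⟩, fun A => rfl, fun s => rfl⟩

lemma loc_inj {m r : ℕ} (A : Matrix (Fin m) (Fin r) K) (h : A.rank = r) :
    Function.Injective A.mulVec :=
  Matrix.mulVec_injective_iff.2 ((loc_rank_eq_iff A).1 h)

lemma loc_mul_cancel {m r n : ℕ} (A : Matrix (Fin m) (Fin r) K) (h : A.rank = r)
    (B B' : Matrix (Fin r) (Fin n) K) (hB : A * B = A * B') : B = B' := by
  apply Matrix.ext_of_mulVec_single
  intro i
  apply loc_inj A h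
  rw [Matrix.mulVec_mulVec, Matrix.mulVec_mulVec, hB]

lemma loc_rank_mul {m r n : ℕ} (A : Matrix (Fin m) (Fin r) K) (h : A.rank = r)
    (B : Matrix (Fin r) (Fin n) K) : (A * B).rank = B.rank := by
  unfold Matrix.rank
  rw [Matrix.mulVecLin_mul, LinearMap.range_comp]
  exact (Submodule.equivMapOfInjective A.mulVecLin (loc_inj A h) _).finrank_eq.symm

lemma loc_colSpace_eq {m n : ℕ} (A : Matrix (Fin m) (Fin n) K) :
    colSpace A = Submodule.span K (Set.range A.col) := Matrix.range_mulVecLin A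

lemma loc_fibre [Fintype K] {m n r : ℕ} (H : Matrix (Fin m) (Fin n) K) (hH : H.rank = r) :
    Fintype.card {p : {A : Matrix (Fin m) (Fin r) K // A.rank = r} ×
      {B : Matrix (Fin r) (Fin n) K // B.rank = r} // p.1.1 * p.2.1 = H}
      = chi (Fintype.card K) r r := by
  have hf : finrank K (colSpace H) = r := hH
  have := card_linearIndependent (K := K) (V := colSpace H) (k := r) hf.ge
  rw [hf] at this
  rw [loc_chi_eq, ← this, ← Nat.card_eq_fintype_card]
  refine Nat.card_congr (Equiv.ofBijective (fun p => ⟨fun i => ⟨p.1.1.1.col i, ?_⟩, ?_⟩) ⟨?_, ?_⟩)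
  · have h1 : colSpace H = colSpace p.1.1.1 := by
      apply Submodule.eq_of_le_of_finrank_eq
      · exact (congrArg colSpace p.2).ge.trans (loc_colSpace_mul _ _)
      · rw [hf]; exact p.1.1.2.symm
    rw [h1, loc_colSpace_eq]
    exact Submodule.subset_span ⟨i, rfl⟩
  · apply LinearIndependent.of_comp (colSpace H).subtype
    exact (loc_rank_eq_iff _).1 p.1.1.2
  · rintro ⟨⟨⟨A, hA⟩, ⟨B, hB⟩⟩, h1⟩ ⟨⟨⟨A', hA'⟩, ⟨B', hB'⟩⟩, h2⟩ h
    have : A = A' := by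
      ext i j
      have h3 := congrFun (congrArg Subtype.val h) j
      exact congrFun (congrArg Subtype.val h3) i
    subst this
    have : B = B' := loc_mul_cancel A hA _ _ (h1.trans h2.symm)
    subst this
    rfl
  · rintro ⟨s, hs⟩
    let A : Matrix (Fin m) (Fin r) K := (Matrix.of fun i => (s i : Fin m → K))ᵀ
    have hA : A.rank = r := (loc_rank_eq_iff _).2 (hs.map' (colSpace H).subtype (by simp))
    have hAH : colSpace A = colSpace H := by
      apply Submodule.eq_of_le_of_finrank_eq
      · rw [loc_colSpace_eq, Submodule.span_le]
        rintro _ ⟨i, rfl⟩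
        exact (s i).2
      · rw [hf]; exact hA
    have hcol : ∀ j, ∃ b, A.mulVec b = H.col j := by
      intro j
      have : H.col j ∈ colSpace A := by
        rw [hAH, loc_colSpace_eq]
        exact Submodule.subset_span ⟨j, rfl⟩
      exact this
    choose b hb using hcol
    let B : Matrix (Fin r) (Fin n) K := (Matrix.of b)ᵀ
    have hAB : A * B = H := by
      ext i j
      exact congrFun (hb j) i
    have hB : B.rank = r := by rw [← loc_rank_mul A hA, hAB, hH]
    exact ⟨⟨⟨⟨A, hA⟩, ⟨B, hB⟩⟩, hAB⟩, rfl⟩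

lemma loc_count [Fintype K] {m n r : ℕ} (hm : r ≤ m) (hn : r ≤ n) :
    chi (Fintype.card K) m r * chi (Fintype.card K) n r =
      Fintype.card {H : Matrix (Fin m) (Fin n) K // H.rank = r} * chi (Fintype.card K) r r := by
  rw [← loc_card_full (K := K) hm, ← loc_card_full' (K := K) hn, ← Fintype.card_prod]
  let f : {A : Matrix (Fin m) (Fin r) K // A.rank = r} ×
      {B : Matrix (Fin r) (Fin n) K // B.rank = r} → {H : Matrix (Fin m) (Fin n) K // H.rank = r} :=
    fun p => ⟨p.1.1 * p.2.1, by rw [loc_rank_mul _ p.1.2, p.2.2]⟩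
  rw [← Fintype.card_congr (Equiv.sigmaFiberEquiv f), Fintype.card_sigma]
  rw [Finset.sum_congr rfl (g := fun _ => chi (Fintype.card K) r r)]
  · simp
  · intro H _
    rw [← loc_fibre H.1 H.2]
    apply Fintype.card_congr
    exact Equiv.subtypeEquivRight fun p => Subtype.ext_iff

lemma loc_chi_pos [Fintype K] {m r : ℕ} (h : r ≤ m) : 0 < chi (Fintype.card K) m r := by
  unfold chi
  apply Finset.prod_pos
  intro i hi
  have := Finset.mem_range.1 hi
  exact Nat.sub_pos_of_lt (Nat.pow_lt_pow_right Fintype.one_lt_card (by omega))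

end MatrixHelpers

/-- (i) if T ≥ M and LOC(H,T) is rank symmetric then H is uniform
given rank; (ii) if H is uniform given rank then LOC(H,T') is rank symmetric for
every positive integer T'. -/
theorem rank_symmetric_and_uniform_given_rank
    {F : Type} [Field F] [Fintype F] (q T M N : ℕ) (hq : Fintype.card F = q)
    (pH : Matrix (Fin M) (Fin N) F → ℝ) (hpH : IsPMF pH) :
    (M ≤ T → RankSymmetric T pH → UniformGivenRank q pH)
    ∧ (UniformGivenRank q pH → ∀ T' : ℕ, 0 < T' → RankSymmetric T' pH) := by
  subst hq
  constructor
  · rintro hMT ⟨μ, -, hμ⟩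
    let X : Matrix (Fin T) (Fin M) F := (1 : Matrix (Fin T) (Fin T) F).submatrix id (Fin.castLE hMT)
    have hX : X.rank = M := by
      rw [loc_rank_eq_iff]
      have h1 : LinearIndependent F (1 : Matrix (Fin T) (Fin T) F).col := by
        rw [← loc_rank_eq_iff, Matrix.rank_one, Fintype.card_fin]
      exact h1.comp _ (Fin.castLE_injective hMT)
    have hp : ∀ H, pH H = μ M H.rank := by
      intro H
      have h1 := hμ X (X * H)
      rw [if_pos (loc_colSpace_mul X H), hX, loc_rank_mul X hX] at h1
      rw [← h1]
      unfold prXY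
      rw [Finset.sum_eq_single H]
      · simp
      · intro H' _ hne
        rw [if_neg]
        exact fun h => hne (loc_mul_cancel X hX _ _ h)
      · simp
    intro H
    have hm : H.rank ≤ M := Matrix.rank_le_height H
    have hn : H.rank ≤ N := Matrix.rank_le_width H
    have hc := loc_count (K := F) hm hn
    have hsum : (∑ H' : Matrix (Fin M) (Fin N) F, if H'.rank = H.rank then pH H' else 0) =
        (Fintype.card {H' : Matrix (Fin M) (Fin N) F // H'.rank = H.rank} : ℝ) * pH H := by
      rw [← Finset.sum_filter, Finset.sum_congr rfl (g := fun _ => pH H)]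
      · rw [Finset.sum_const, Fintype.card_subtype, nsmul_eq_mul]
      · intro H' hH'
        rw [hp, hp, (Finset.mem_filter.1 hH').2]
    rw [hsum]
    have p1 : (0 : ℝ) < chi (Fintype.card F) M H.rank := by exact_mod_cast loc_chi_pos hm
    have p2 : (0 : ℝ) < chi (Fintype.card F) N H.rank := by exact_mod_cast loc_chi_pos hn
    have p3 : (0 : ℝ) < chi (Fintype.card F) H.rank H.rank := by
      exact_mod_cast loc_chi_pos (K := F) le_rfl
    have hc' : (chi (Fintype.card F) M H.rank : ℝ) * chi (Fintype.card F) N H.rank =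
      Fintype.card {H' : Matrix (Fin M) (Fin N) F // H'.rank = H.rank} *
        chi (Fintype.card F) H.rank H.rank := by exact_mod_cast hc
    have h0 := mul_pos p1 p2
    rw [eq_div_iff (div_pos h0 p3).ne', hc', mul_div_cancel_right₀ _ p3.ne', mul_comm]
  · intro hU t _
    have hp : ∀ H H' : Matrix (Fin M) (Fin N) F, H.rank = H'.rank → pH H = pH H' := by
      intro H H' h
      rw [hU H, hU H', h]
    have hb : ∀ (X : Matrix (Fin t) (Fin M) F) (Y : Matrix (Fin t) (Fin N) F),
        0 ≤ prXY pH X Y ∧ prXY pH X Y ≤ 1 := by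
      intro X Y
      constructor
      · exact Finset.sum_nonneg fun H _ => by split_ifs <;> simp [hpH.1 H]
      · rw [← hpH.2]
        exact Finset.sum_le_sum fun H _ => by split_ifs <;> simp [hpH.1 H]
    let S : ℕ → ℕ → Prop := fun a b =>
      ∃ p : Matrix (Fin t) (Fin M) F × Matrix (Fin t) (Fin N) F,
        colSpace p.2 ≤ colSpace p.1 ∧ p.1.rank = a ∧ p.2.rank = b
    refine ⟨fun a b => if h : S a b then prXY pH h.choose.1 h.choose.2 else 0, ?_, ?_⟩
    · intro a b
      dsimp only
      split_ifs with h
      · exact hb _ _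
      · simp
    · intro X Y
      dsimp only
      split_ifs with h1 h2
      · have h3 := h2.choose_spec
        exact loc_prXY_eq pH hp _ _ _ _ h1 h3.1 h3.2.1.symm h3.2.2.symm
      · exact absurd ⟨(X, Y), h1, rfl, rfl⟩ h2
      · unfold prXY
        apply Finset.sum_eq_zero
        intro H _
        rw [if_neg]
        rintro rfl
        exact h1 (loc_colSpace_mul X H)


end
end
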